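/- For every partition λ ⊢ n, the multiplicity of the Specht module SP_λ in the representation of S_n induced from the identity representation of the Young subgroup H(λ) equals one: ⟨φ_λ, χ_{SP_λ}⟩ = 1. -/

import Mathlib

open scoped Classical

noncomputable section

open MvPolynomial

/-- Partial sums of the row lengths of a Young diagram. -/
def rowPartialSum (lam : YoungDiagram) (i : ℕ) : ℕ :=
  ∑ j ∈ Finset.range i, lam.rowLen j

/-- The (0-indexed) row of the canonical tableau of shape `lam` containing the entry `m`
(the entries `0,…,n-1` fill the cells consecutively row by row). -/
def rowIndex (lam : YoungDiagram) (m : ℕ) : ℕ :=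
  ((Finset.range (m + 1)).filter fun i => rowPartialSum lam (i + 1) ≤ m).card

/-- The Young subgroup `H(λ) ≤ S_n`: permutations preserving each row of the canonical
tableau of shape `λ`. -/
def youngH (n : ℕ) (lam : YoungDiagram) : Subgroup (Equiv.Perm (Fin n)) where
  carrier := {g | ∀ m : Fin n, rowIndex lam (g m) = rowIndex lam m}
  one_mem' := by intro m; simp
  mul_mem' := by
    intro a b ha hb m
    have h1 := ha (b m)
    have h2 := hb m
    simpa [Equiv.Perm.mul_apply] using h1.trans h2
  inv_mem' := by
    intro a ha m
    simpa using (ha (a⁻¹ m)).symm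

/-- The character of the representation induced from the trivial representation of a
subgroup `H`:  `φ(g) = (1/|H|) · #{x : x⁻¹ g x ∈ H}`. -/
noncomputable def indTrivChar {G : Type*} [Group G] (H : Subgroup G) (g : G) : ℂ :=
  (Nat.card H : ℂ)⁻¹ * (Nat.card {x : G // x⁻¹ * g * x ∈ H} : ℂ)

/-- The inner product of class functions on a finite group:
`⟨a,b⟩ = (1/|G|) Σ_g a g * conj (b g)`. -/
noncomputable def innerChar {G : Type*} [Group G] [Fintype G] (a b : G → ℂ) : ℂ :=
  (Fintype.card G : ℂ)⁻¹ * ∑ g : G, a g * (starRingEnd ℂ) (b g)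

/-- The Specht polynomial of a bijective filling `T` of the cells of `lam` by `0,…,n-1`:
the product over all pairs of cells in the same column (the first strictly above the
second) of the differences of the corresponding variables — i.e. the product of the
column Vandermonde determinants. -/
noncomputable def spechtPoly (n : ℕ) (lam : YoungDiagram) (T : lam.cells ≃ Fin n) :
    MvPolynomial (Fin n) ℂ :=
  ∏ p ∈ Finset.univ.filter
      (fun p : lam.cells × lam.cells =>
        (p.1 : ℕ × ℕ).2 = (p.2 : ℕ × ℕ).2 ∧ (p.1 : ℕ × ℕ).1 < (p.2 : ℕ × ℕ).1),
    (X (T p.1) - X (T p.2))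

/-- The Specht module: the linear span of all Specht polynomials of shape `lam`. -/
noncomputable def spechtModule (n : ℕ) (lam : YoungDiagram) :
    Submodule ℂ (MvPolynomial (Fin n) ℂ) :=
  Submodule.span ℂ (Set.range (spechtPoly n lam))

lemma rename_spechtPoly (n : ℕ) (lam : YoungDiagram) (T : lam.cells ≃ Fin n)
    (g : Equiv.Perm (Fin n)) :
    MvPolynomial.rename g (spechtPoly n lam T) = spechtPoly n lam (T.trans g) := by
  simp only [spechtPoly, map_prod, map_sub, MvPolynomial.rename_X]
  rfl

lemma spechtModule_invariant (n : ℕ) (lam : YoungDiagram) (g : Equiv.Perm (Fin n)) :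
    ∀ p ∈ spechtModule n lam,
      (MvPolynomial.rename (σ := Fin n) (R := ℂ) g).toLinearMap p ∈ spechtModule n lam := by
  intro p hp
  induction hp using Submodule.span_induction with
  | mem x hx =>
      obtain ⟨T, rfl⟩ := hx
      simp only [AlgHom.toLinearMap_apply, rename_spechtPoly]
      exact Submodule.subset_span ⟨_, rfl⟩
  | zero => simp
  | add x y _ _ hx hy => rw [map_add]; exact add_mem hx hy
  | smul a x _ hx => rw [map_smul]; exact Submodule.smul_mem _ _ hx

/-- The character of the representation of the symmetric group on the Specht module
(permutations act on polynomials by permuting the variables). -/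
noncomputable def spechtChar (n : ℕ) (lam : YoungDiagram) (g : Equiv.Perm (Fin n)) : ℂ :=
  LinearMap.trace ℂ (spechtModule n lam)
    (LinearMap.restrict (MvPolynomial.rename (σ := Fin n) (R := ℂ) g).toLinearMap
      (spechtModule_invariant n lam g))

lemma rps_mono (lam : YoungDiagram) : Monotone (rowPartialSum lam) := by
  intro a b h
  exact Finset.sum_le_sum_of_subset (by simpa using h)

lemma rps_succ (lam : YoungDiagram) (i : ℕ) :
    rowPartialSum lam (i + 1) = rowPartialSum lam i + lam.rowLen i := by
  simp [rowPartialSum, Finset.sum_range_succ]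

lemma rps_le_card (lam : YoungDiagram) (i : ℕ) : rowPartialSum lam i ≤ lam.card := by
  have h : rowPartialSum lam i = (lam.cells.filter (fun c => c.1 < i)).card := by
    rw [Finset.card_eq_sum_card_fiberwise (f := Prod.fst) (t := Finset.range i)]
    · unfold rowPartialSum
      apply Finset.sum_congr rfl
      intro j hj
      rw [YoungDiagram.rowLen_eq_card]
      congr 1
      ext c
      simp only [YoungDiagram.mem_row_iff, Finset.mem_filter, YoungDiagram.mem_cells]
      simp only [Finset.mem_range] at hj
      constructor
      · rintro ⟨h1, h2⟩; exact ⟨⟨h1, by omega⟩, h2⟩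
      · rintro ⟨⟨h1, _⟩, h2⟩; exact ⟨h1, h2⟩
    · intro c hc
      simpa using (Finset.mem_filter.1 hc).2
  rw [h]
  exact Finset.card_le_card (Finset.filter_subset _ _)

lemma le_rps (lam : YoungDiagram) (i : ℕ) (h : 0 < lam.rowLen i) : i ≤ rowPartialSum lam i := by
  unfold rowPartialSum
  calc i = ∑ j ∈ Finset.range i, 1 := by simp
    _ ≤ _ := by
      apply Finset.sum_le_sum
      intro j hj
      have := lam.rowLen_anti j i (Finset.mem_range.1 hj).le
      omega

lemma rowIndex_cell (lam : YoungDiagram) (i j : ℕ) (h : (i, j) ∈ lam) :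
    rowIndex lam (rowPartialSum lam i + j) = i := by
  have hj := YoungDiagram.mem_iff_lt_rowLen.1 h
  have hi := le_rps lam i (by omega)
  unfold rowIndex
  have : ((Finset.range (rowPartialSum lam i + j + 1)).filter
      fun i' => rowPartialSum lam (i' + 1) ≤ rowPartialSum lam i + j) = Finset.range i := by
    ext k
    simp only [Finset.mem_filter, Finset.mem_range]
    constructor
    · rintro ⟨_, h2⟩
      by_contra hk
      have := rps_mono lam (show i + 1 ≤ k + 1 by omega)
      rw [rps_succ] at this
      omega
    · intro hk
      have := rps_mono lam (show k + 1 ≤ i by omega)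
      exact ⟨by omega, by omega⟩
  rw [this, Finset.card_range]

lemma exists_canon (n : ℕ) (lam : YoungDiagram) (hlam : lam.card = n) :
    ∃ T : lam.cells ≃ Fin n, ∀ c : lam.cells, rowIndex lam (T c) = (c : ℕ × ℕ).1 := by
  have hlt : ∀ c : lam.cells, rowPartialSum lam (c : ℕ × ℕ).1 + (c : ℕ × ℕ).2 < n := by
    rintro ⟨⟨i, j⟩, hc⟩
    have hj := YoungDiagram.mem_iff_lt_rowLen.1 ((YoungDiagram.mem_cells _).1 hc)
    have := rps_le_card lam (i + 1)
    rw [rps_succ] at this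
    simp only
    omega
  let f : lam.cells → Fin n := fun c => ⟨_, hlt c⟩
  have hr : ∀ c, rowIndex lam (f c) = (c : ℕ × ℕ).1 := by
    rintro ⟨⟨i, j⟩, hc⟩
    exact rowIndex_cell lam i j ((YoungDiagram.mem_cells _).1 hc)
  have hinj : Function.Injective f := by
    intro a b hab
    have h1 : (a : ℕ × ℕ).1 = (b : ℕ × ℕ).1 := by rw [← hr a, ← hr b, hab]
    have h2 := congrArg Fin.val hab
    simp only [f, h1] at h2
    exact Subtype.ext (Prod.ext h1 (by omega))
  have hb : Function.Bijective f := by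
    rw [Fintype.bijective_iff_injective_and_card]
    refine ⟨hinj, ?_⟩
    rw [Fintype.card_coe, Fintype.card_fin]
    exact hlam
  exact ⟨Equiv.ofBijective f hb, hr⟩

/-- Combinatorial lemma. -/
lemma comb (lam : YoungDiagram) (σ : Equiv.Perm lam.cells)
    (hσ : ∀ x y : lam.cells, (x : ℕ × ℕ).2 = (y : ℕ × ℕ).2 →
      (σ x : ℕ × ℕ).1 = (σ y : ℕ × ℕ).1 → x = y) (x : lam.cells) :
    ((σ x : ℕ × ℕ).1, (x : ℕ × ℕ).2) ∈ lam := by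
  set j0 := (x : ℕ × ℕ).2 with hj0
  set I := lam.colLen j0 with hI
  let A : Finset lam.cells := Finset.univ.filter fun y => (σ y : ℕ × ℕ).1 < I
  let B : Finset lam.cells := Finset.univ.filter fun y => (y : ℕ × ℕ).1 < I
  let S : Finset ℕ := Finset.univ.image fun y : lam.cells => (y : ℕ × ℕ).2
  have hAB : A.card = B.card := by
    apply Finset.card_bij (fun y _ => σ y)
    · intro a ha; simpa [A, B] using ha
    · intro a _ b _ h; exact σ.injective h
    · intro b hb; exact ⟨σ.symm b, by simpa [A, B] using hb, by simp⟩
  have hle : ∀ j ∈ S, (A.filter fun y : lam.cells => (y : ℕ × ℕ).2 = j).card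
      ≤ (B.filter fun y : lam.cells => (y : ℕ × ℕ).2 = j).card := by
    intro j _
    by_cases h : I ≤ lam.colLen j
    · calc _ ≤ (Finset.range I).card := by
            apply Finset.card_le_card_of_injOn (fun y => (σ y : ℕ × ℕ).1)
            · intro y hy
              simp only [A, Finset.coe_filter, Finset.mem_filter, Set.mem_ofPred_eq] at hy
              simpa using hy.1.2
            · intro y hy z hz hyz
              simp only [A, Finset.coe_filter, Finset.mem_filter, Set.mem_ofPred_eq] at hy hz
              exact hσ y z (hy.2.trans hz.2.symm) hyz
        _ ≤ _ := by
            have hm : ∀ i ∈ Finset.range I, (i, j) ∈ lam.cells := fun i hi =>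
              (YoungDiagram.mem_cells _).2 (YoungDiagram.mem_iff_lt_colLen.2
                (lt_of_lt_of_le (Finset.mem_range.1 hi) h))
            have := Finset.card_le_card_of_injOn (s := (Finset.range I).attach)
              (t := B.filter fun y : lam.cells => (y : ℕ × ℕ).2 = j)
              (fun i => (⟨(i.1, j), hm i.1 i.2⟩ : lam.cells))
              (by
                intro i _
                have := Finset.mem_range.1 i.2
                refine Finset.mem_coe.2 (Finset.mem_filter.2 ⟨Finset.mem_filter.2
                  ⟨Finset.mem_univ _, this⟩, rfl⟩))
              (by
                intro a _ b _ hab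
                exact Subtype.ext (congrArg (fun z : lam.cells => (z : ℕ × ℕ).1) hab))
            simpa using this
    · apply Finset.card_le_card
      intro y hy
      simp only [A, B, Finset.mem_filter, Finset.mem_univ, true_and] at hy ⊢
      refine ⟨?_, hy.2⟩
      have : ((y : ℕ × ℕ).1, (y : ℕ × ℕ).2) ∈ lam := (YoungDiagram.mem_cells _).1 y.2
      rw [YoungDiagram.mem_iff_lt_colLen, hy.2] at this
      omega
  have hsum : ∑ j ∈ S, (A.filter fun y : lam.cells => (y : ℕ × ℕ).2 = j).card
      = ∑ j ∈ S, (B.filter fun y : lam.cells => (y : ℕ × ℕ).2 = j).card := by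
    rw [← Finset.card_eq_sum_card_fiberwise, ← Finset.card_eq_sum_card_fiberwise, hAB]
    · intro y _; simp only [S, Finset.coe_image]; exact ⟨y, by simp, rfl⟩
    · intro y _; simp only [S, Finset.coe_image]; exact ⟨y, by simp, rfl⟩
  have heq := (Finset.sum_eq_sum_iff_of_le hle).1 hsum j0
    (Finset.mem_image.2 ⟨x, Finset.mem_univ _, rfl⟩)
  have hcol : ∀ y : lam.cells, (y : ℕ × ℕ).2 = j0 → (y : ℕ × ℕ).1 < I := by
    intro y hy
    have : ((y : ℕ × ℕ).1, (y : ℕ × ℕ).2) ∈ lam := (YoungDiagram.mem_cells _).1 y.2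
    rwa [YoungDiagram.mem_iff_lt_colLen, hy] at this
  have hsub : (A.filter fun y : lam.cells => (y : ℕ × ℕ).2 = j0) ⊆ (B.filter fun y : lam.cells => (y : ℕ × ℕ).2 = j0) := by
    intro y hy
    simp only [A, B, Finset.mem_filter, Finset.mem_univ, true_and] at hy ⊢
    exact ⟨hcol y hy.2, hy.2⟩
  have hE := Finset.eq_of_subset_of_card_le hsub heq.ge
  have hx : x ∈ (B.filter fun y : lam.cells => (y : ℕ × ℕ).2 = j0) := by
    simp only [B, Finset.mem_filter, Finset.mem_univ, true_and]
    exact ⟨hcol x rfl, rfl⟩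
  rw [← hE] at hx
  simp only [A, Finset.mem_filter, Finset.mem_univ, true_and] at hx
  exact YoungDiagram.mem_iff_lt_colLen.2 hx.1

lemma specht_sq (n : ℕ) (lam : YoungDiagram) (T : lam.cells ≃ Fin n) :
    (spechtPoly n lam T) ^ 2 =
      (∏ p ∈ Finset.univ.filter
      (fun p : lam.cells × lam.cells =>
        (p.1 : ℕ × ℕ).2 = (p.2 : ℕ × ℕ).2 ∧ (p.1 : ℕ × ℕ).1 < (p.2 : ℕ × ℕ).1),
        (-1 : MvPolynomial (Fin n) ℂ)) *
      ∏ p ∈ Finset.univ.filter (fun p : Fin n × Fin n =>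
        (T.symm p.1 : ℕ × ℕ).2 = (T.symm p.2 : ℕ × ℕ).2 ∧ p.1 ≠ p.2), (X p.1 - X p.2) := by
  have h1 : ∏ p ∈ Finset.univ.filter (fun p : Fin n × Fin n =>
        (T.symm p.1 : ℕ × ℕ).2 = (T.symm p.2 : ℕ × ℕ).2 ∧ p.1 ≠ p.2),
          (X p.1 - X p.2 : MvPolynomial (Fin n) ℂ) =
      ∏ p ∈ Finset.univ.filter (fun p : lam.cells × lam.cells =>
        (p.1 : ℕ × ℕ).2 = (p.2 : ℕ × ℕ).2 ∧ p.1 ≠ p.2), (X (T p.1) - X (T p.2)) := by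
    symm
    apply Finset.prod_equiv (T.prodCongr T)
    · intro p; simp
    · intro p _; simp
  have h2 : (Finset.univ.filter (fun p : lam.cells × lam.cells =>
        (p.1 : ℕ × ℕ).2 = (p.2 : ℕ × ℕ).2 ∧ p.1 ≠ p.2)) =
      (Finset.univ.filter (fun p : lam.cells × lam.cells =>
        (p.1 : ℕ × ℕ).2 = (p.2 : ℕ × ℕ).2 ∧ (p.1 : ℕ × ℕ).1 < (p.2 : ℕ × ℕ).1)) ∪
      (Finset.univ.filter (fun p : lam.cells × lam.cells =>
        (p.1 : ℕ × ℕ).2 = (p.2 : ℕ × ℕ).2 ∧ (p.2 : ℕ × ℕ).1 < (p.1 : ℕ × ℕ).1)) := by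
    ext ⟨a, b⟩
    simp only [Finset.mem_filter, Finset.mem_univ, true_and, Finset.mem_union, ne_eq,
      Subtype.ext_iff, Prod.ext_iff]
    omega
  have h3 : ∏ p ∈ (Finset.univ.filter (fun p : lam.cells × lam.cells =>
        (p.1 : ℕ × ℕ).2 = (p.2 : ℕ × ℕ).2 ∧ (p.2 : ℕ × ℕ).1 < (p.1 : ℕ × ℕ).1)),
          (X (T p.1) - X (T p.2) : MvPolynomial (Fin n) ℂ) =
      ∏ p ∈ Finset.univ.filter
      (fun p : lam.cells × lam.cells =>
        (p.1 : ℕ × ℕ).2 = (p.2 : ℕ × ℕ).2 ∧ (p.1 : ℕ × ℕ).1 < (p.2 : ℕ × ℕ).1),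
        (X (T p.2) - X (T p.1)) := by
    apply Finset.prod_equiv (Equiv.prodComm _ _)
    · intro p; simp [eq_comm]
    · intro p _; simp
  rw [h1, h2, Finset.prod_union, h3, spechtPoly, ← Finset.prod_mul_distrib,
    ← Finset.prod_mul_distrib, ← Finset.prod_pow]
  · apply Finset.prod_congr rfl
    intro p _
    ring
  · rw [Finset.disjoint_left]
    intro p hp hq
    simp only [Finset.mem_filter, Finset.mem_univ, true_and] at hp hq
    omega

lemma specht_pm (n : ℕ) (lam : YoungDiagram) (T T' : lam.cells ≃ Fin n)
    (h : ∀ k, (T.symm k : ℕ × ℕ).2 = (T'.symm k : ℕ × ℕ).2) :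
    spechtPoly n lam T = spechtPoly n lam T' ∨ spechtPoly n lam T = - spechtPoly n lam T' := by
  apply sq_eq_sq_iff_eq_or_eq_neg.1
  rw [specht_sq, specht_sq]
  simp only [h]

lemma specht_swap (n : ℕ) (lam : YoungDiagram) (T : lam.cells ≃ Fin n) (x y : lam.cells)
    (hc : (x : ℕ × ℕ).2 = (y : ℕ × ℕ).2) (hr : (x : ℕ × ℕ).1 < (y : ℕ × ℕ).1) :
    MvPolynomial.rename (Equiv.swap (T x) (T y)) (spechtPoly n lam T) = - spechtPoly n lam T := by
  set s := Equiv.swap (T x) (T y) with hs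
  have hxy : x ≠ y := by rintro rfl; omega
  have hTne : T x ≠ T y := fun h => hxy (T.injective h)
  have hpm : spechtPoly n lam (T.trans s) = spechtPoly n lam T ∨
      spechtPoly n lam (T.trans s) = - spechtPoly n lam T := by
    apply specht_pm
    intro k
    simp only [Equiv.symm_trans_apply, hs, Equiv.symm_swap]
    by_cases h1 : k = T x
    · subst h1; simp [hc]
    by_cases h2 : k = T y
    · subst h2; simp [hc]
    rw [Equiv.swap_apply_of_ne_of_ne h1 h2]
  rw [rename_spechtPoly]
  refine hpm.resolve_left ?_
  intro hP
  rw [← rename_spechtPoly] at hP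
  let F : Finset (lam.cells × lam.cells) := Finset.univ.filter
      (fun p : lam.cells × lam.cells =>
        (p.1 : ℕ × ℕ).2 = (p.2 : ℕ × ℕ).2 ∧ (p.1 : ℕ × ℕ).1 < (p.2 : ℕ × ℕ).1)
  have hmem : (x, y) ∈ F := by simp [F, hc, hr]
  let Q : MvPolynomial (Fin n) ℂ := ∏ p ∈ F.erase (x, y), (X (T p.1) - X (T p.2))
  have hPQ : spechtPoly n lam T = (X (T x) - X (T y)) * Q :=
    (Finset.mul_prod_erase F (fun p => (X (T p.1) - X (T p.2) : MvPolynomial (Fin n) ℂ)) hmem).symm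
  have hX : (X (T x) - X (T y) : MvPolynomial (Fin n) ℂ) ≠ 0 :=
    sub_ne_zero.2 fun h => hTne (X_injective h)
  have hQ : MvPolynomial.rename s Q = - Q := by
    rw [hPQ, map_mul, map_sub, rename_X, rename_X] at hP
    simp only [hs, Equiv.swap_apply_left, Equiv.swap_apply_right] at hP
    apply mul_left_cancel₀ hX
    rw [hs]
    linear_combination -hP
  let g : Fin n → Fin n := fun k => if k = T y then T x else k
  have hg : g ∘ s = g := by
    funext k
    simp only [Function.comp, g, hs]
    by_cases h1 : k = T x
    · subst h1; simp
    by_cases h2 : k = T y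
    · subst h2; simp
    rw [Equiv.swap_apply_of_ne_of_ne h1 h2]
  have h0 : MvPolynomial.rename g Q = - MvPolynomial.rename g Q := by
    conv_lhs => rw [← hg, ← rename_rename, hQ, map_neg]
  have h0' : MvPolynomial.rename g Q = 0 := self_eq_neg.1 h0
  revert h0'
  simp only [Q, map_prod]
  rw [imp_false, ← ne_eq, Finset.prod_ne_zero_iff]
  rintro ⟨a, b⟩ hab
  simp only [F, Finset.mem_erase, Finset.mem_filter, Finset.mem_univ, true_and] at hab
  obtain ⟨hne, hc', hr'⟩ := hab
  rw [map_sub, rename_X, rename_X, sub_ne_zero]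
  intro h
  have h := X_injective h
  have hab : a ≠ b := by rintro rfl; omega
  simp only [g, EmbeddingLike.apply_eq_iff_eq] at h
  split_ifs at h with h1 h2 h2
  · exact hab (h1.trans h2.symm)
  · have := T.injective h
    subst this h1
    omega
  · have := T.injective h
    exact hne (by rw [this, h2])
  · exact hab (T.injective h)

/-- unnormalised symmetriser -/
def symH (n : ℕ) (lam : YoungDiagram) : MvPolynomial (Fin n) ℂ →ₗ[ℂ] MvPolynomial (Fin n) ℂ :=
  ∑ h : youngH n lam, (MvPolynomial.rename (σ := Fin n) (R := ℂ) (h : Equiv.Perm (Fin n))).toLinearMap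

lemma symH_apply (n : ℕ) (lam : YoungDiagram) (p : MvPolynomial (Fin n) ℂ) :
    symH n lam p = ∑ h : youngH n lam, MvPolynomial.rename (h : Equiv.Perm (Fin n)) p := by
  simp [symH]

lemma symH_rename (n : ℕ) (lam : YoungDiagram) (p : MvPolynomial (Fin n) ℂ)
    (g : Equiv.Perm (Fin n)) (hg : g ∈ youngH n lam) :
    symH n lam (MvPolynomial.rename g p) = symH n lam p := by
  rw [symH_apply, symH_apply]
  apply Fintype.sum_equiv (Equiv.mulRight (⟨g, hg⟩ : youngH n lam))
  intro h
  rw [rename_rename]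
  rfl

lemma rename_symH (n : ℕ) (lam : YoungDiagram) (p : MvPolynomial (Fin n) ℂ)
    (g : Equiv.Perm (Fin n)) (hg : g ∈ youngH n lam) :
    MvPolynomial.rename g (symH n lam p) = symH n lam p := by
  rw [symH_apply, map_sum]
  apply Fintype.sum_equiv (Equiv.mulLeft (⟨g, hg⟩ : youngH n lam))
  intro h
  rw [rename_rename]
  rfl

lemma symH_mem (n : ℕ) (lam : YoungDiagram) (p : MvPolynomial (Fin n) ℂ)
    (hp : p ∈ spechtModule n lam) : symH n lam p ∈ spechtModule n lam := by
  rw [symH_apply]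
  exact sum_mem fun h _ => spechtModule_invariant n lam h p hp

lemma symH_specht (n : ℕ) (lam : YoungDiagram) (T0 : lam.cells ≃ Fin n)
    (hT0 : ∀ c : lam.cells, rowIndex lam (T0 c) = (c : ℕ × ℕ).1) (T : lam.cells ≃ Fin n) :
    ∃ c : ℂ, symH n lam (spechtPoly n lam T) = c • symH n lam (spechtPoly n lam T0) := by
  have hrow : ∀ k : Fin n, rowIndex lam k = (T0.symm k : ℕ × ℕ).1 := by
    intro k; rw [← hT0]; simp
  by_cases hσ : ∀ x y : lam.cells, (x : ℕ × ℕ).2 = (y : ℕ × ℕ).2 →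
      ((T.trans T0.symm) x : ℕ × ℕ).1 = ((T.trans T0.symm) y : ℕ × ℕ).1 → x = y
  · have hm := comb lam (T.trans T0.symm) hσ
    let f : lam.cells → lam.cells := fun x => ⟨_, (YoungDiagram.mem_cells _).2 (hm x)⟩
    have hf : Function.Bijective f := by
      apply Finite.injective_iff_bijective.1
      intro x y h
      simp only [f, Subtype.mk.injEq, Prod.mk.injEq] at h
      exact hσ x y h.2 h.1
    let e := Equiv.ofBijective f hf
    let T' : lam.cells ≃ Fin n := e.symm.trans T
    have hT' : ∀ k, T'.symm k = f (T.symm k) := fun k => rfl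
    let g : Equiv.Perm (Fin n) := T0.symm.trans T'
    have hg : g ∈ youngH n lam := by
      intro k
      rw [hrow, hrow]
      have h1 : (T'.symm (g k) : ℕ × ℕ).1 = (T0.symm k : ℕ × ℕ).1 := by simp [g]
      rw [← h1, hT']
      simp [f]
    have hTT : T0.trans g = T' := by ext; simp [g]
    have h2 : symH n lam (spechtPoly n lam T') = symH n lam (spechtPoly n lam T0) := by
      rw [← hTT, ← rename_spechtPoly, symH_rename _ _ _ _ hg]
    rcases specht_pm n lam T T' (fun k => by rw [hT']) with h | h
    · exact ⟨1, by rw [h, h2, one_smul]⟩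
    · exact ⟨-1, by rw [h, map_neg, h2, neg_one_smul]⟩
  · refine ⟨0, ?_⟩
    rw [zero_smul]
    have key : ∀ x y : lam.cells, (x : ℕ × ℕ).2 = (y : ℕ × ℕ).2 →
        ((T.trans T0.symm) x : ℕ × ℕ).1 = ((T.trans T0.symm) y : ℕ × ℕ).1 →
        (x : ℕ × ℕ).1 < (y : ℕ × ℕ).1 → symH n lam (spechtPoly n lam T) = 0 := by
      intro x y hc hr hlt
      have hs : Equiv.swap (T x) (T y) ∈ youngH n lam := by
        have hr' : rowIndex lam (T x) = rowIndex lam (T y) := by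
          rw [hrow, hrow]; exact hr
        intro k
        by_cases h1 : k = T x
        · subst h1; simp [hr']
        by_cases h2 : k = T y
        · subst h2; simp [hr']
        rw [Equiv.swap_apply_of_ne_of_ne h1 h2]
      have := symH_rename n lam (spechtPoly n lam T) _ hs
      rw [specht_swap n lam T x y hc hlt, map_neg] at this
      exact self_eq_neg.1 this.symm
    push Not at hσ
    obtain ⟨x, y, hc, hr, hne⟩ := hσ
    rcases lt_trichotomy (x : ℕ × ℕ).1 (y : ℕ × ℕ).1 with h | h | h
    · exact key x y hc hr h
    · exact absurd (Subtype.ext (Prod.ext h hc)) hne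
    · exact key y x hc.symm hr.symm h

lemma symH_ne_zero (n : ℕ) (lam : YoungDiagram) (T0 : lam.cells ≃ Fin n)
    (hT0 : ∀ c : lam.cells, rowIndex lam (T0 c) = (c : ℕ × ℕ).1) :
    symH n lam (spechtPoly n lam T0) ≠ 0 := by
  intro h0
  have h := congrArg (MvPolynomial.aeval (R := ℂ) fun k : Fin n => (rowIndex lam k : ℂ)) h0
  rw [symH_apply, map_sum, map_zero] at h
  have hh : ∀ g : youngH n lam, MvPolynomial.aeval (R := ℂ) (fun k : Fin n => (rowIndex lam k : ℂ))
      (MvPolynomial.rename (g : Equiv.Perm (Fin n)) (spechtPoly n lam T0)) =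
      MvPolynomial.aeval (R := ℂ) (fun k : Fin n => (rowIndex lam k : ℂ)) (spechtPoly n lam T0) := by
    intro g
    rw [aeval_rename]
    congr 2
    funext k
    simp only [Function.comp]
    rw [g.2 k]
  simp only [hh, Finset.sum_const, nsmul_eq_mul, mul_eq_zero] at h
  rcases h with h | h
  · rw [Nat.cast_eq_zero, Finset.card_eq_zero] at h
    exact Finset.univ_nonempty.ne_empty h
  · revert h
    rw [imp_false, ← ne_eq, spechtPoly, map_prod, Finset.prod_ne_zero_iff]
    intro p hp
    simp only [Finset.mem_filter, Finset.mem_univ, true_and] at hp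
    rw [map_sub, aeval_X, aeval_X, hT0, hT0, sub_ne_zero]
    exact_mod_cast hp.2.ne

/-- The Specht representation. -/
def spechtRep (n : ℕ) (lam : YoungDiagram) :
    Representation ℂ (Equiv.Perm (Fin n)) (spechtModule n lam) where
  toFun g := LinearMap.restrict (MvPolynomial.rename (σ := Fin n) (R := ℂ) g).toLinearMap
      (spechtModule_invariant n lam g)
  map_one' := by
    ext1 p
    apply Subtype.ext
    simp [LinearMap.restrict_apply]
  map_mul' a b := by
    ext1 p
    apply Subtype.ext
    simp [LinearMap.restrict_apply, rename_rename]

lemma spechtRep_coe (n : ℕ) (lam : YoungDiagram) (g : Equiv.Perm (Fin n))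
    (p : spechtModule n lam) :
    ((spechtRep n lam g p : spechtModule n lam) : MvPolynomial (Fin n) ℂ) =
      MvPolynomial.rename g (p : MvPolynomial (Fin n) ℂ) := rfl

lemma finrank_inv (n : ℕ) (lam : YoungDiagram) (hlam : lam.card = n) :
    Module.finrank ℂ (Representation.invariants
      ((spechtRep n lam).comp (youngH n lam).subtype)) = 1 := by
  obtain ⟨T0, hT0⟩ := exists_canon n lam hlam
  have hmem := symH_mem n lam (spechtPoly n lam T0) (Submodule.subset_span ⟨T0, rfl⟩)
  have hspan : ∀ w ∈ spechtModule n lam,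
      ∃ c : ℂ, symH n lam w = c • symH n lam (spechtPoly n lam T0) := by
    intro w hw
    induction hw using Submodule.span_induction with
    | mem x hx =>
        obtain ⟨T, rfl⟩ := hx
        exact symH_specht n lam T0 hT0 T
    | zero => exact ⟨0, by simp⟩
    | add x y _ _ hx hy =>
        obtain ⟨a, ha⟩ := hx
        obtain ⟨b, hb⟩ := hy
        exact ⟨a + b, by rw [map_add, ha, hb, add_smul]⟩
    | smul a x _ hx =>
        obtain ⟨b, hb⟩ := hx
        exact ⟨a * b, by rw [map_smul, hb, mul_smul]⟩
  refine (finrank_eq_one (R := ℂ) (M := Representation.invariants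
      ((spechtRep n lam).comp (youngH n lam).subtype))
      ⟨⟨_, hmem⟩, ?_⟩ ?_ ?_)
  · rw [Representation.mem_invariants]
    intro g
    apply Subtype.ext
    exact rename_symH n lam _ g g.2
  · intro h
    exact symH_ne_zero n lam T0 hT0 (congrArg Subtype.val (congrArg Subtype.val h))
  · rintro ⟨⟨w, hw⟩, hinv⟩
    rw [Representation.mem_invariants] at hinv
    have h1 : symH n lam w = (Fintype.card (youngH n lam) : ℂ) • w := by
      rw [symH_apply]
      have : ∀ g : youngH n lam, MvPolynomial.rename (g : Equiv.Perm (Fin n)) w = w := fun g =>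
        congrArg Subtype.val (hinv g)
      simp only [this, Finset.sum_const, Finset.card_univ]
      rw [Nat.cast_smul_eq_nsmul]
    have h2 := hspan w hw
    obtain ⟨c, hc⟩ := h2
    have hcard : (Fintype.card (youngH n lam) : ℂ) ≠ 0 := Nat.cast_ne_zero.2 Fintype.card_ne_zero
    refine ⟨(Fintype.card (youngH n lam) : ℂ)⁻¹ * c, ?_⟩
    apply Subtype.ext
    apply Subtype.ext
    change ((Fintype.card (youngH n lam) : ℂ)⁻¹ * c) • symH n lam (spechtPoly n lam T0) = w
    rw [mul_smul, ← hc, h1, smul_smul, inv_mul_cancel₀ hcard, one_smul]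

lemma frob {G : Type*} [Group G] [Fintype G] (H : Subgroup G) (χ : G → ℂ)
    (hχ : ∀ g h, χ (h * g * h⁻¹) = χ g) :
    innerChar (indTrivChar H) χ = (starRingEnd ℂ) ((Nat.card H : ℂ)⁻¹ * ∑ h : H, χ h) := by
  have h1 : ∀ g : G, (Nat.card {x : G // x⁻¹ * g * x ∈ H} : ℂ) =
      ∑ x : G, if x⁻¹ * g * x ∈ H then (1 : ℂ) else 0 := by
    intro g
    rw [Nat.card_eq_fintype_card, Fintype.card_subtype, Finset.sum_boole]
  have h2 : ∀ x : G, ∑ g : G, (if x⁻¹ * g * x ∈ H then (1 : ℂ) else 0) * (starRingEnd ℂ) (χ g) =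
      ∑ h : H, (starRingEnd ℂ) (χ h) := by
    intro x
    rw [← (MulAut.conj x).toEquiv.sum_comp]
    have h4 : ∀ g : G, x⁻¹ * ((MulAut.conj x).toEquiv g) * x = g := by
      intro g; simp [mul_assoc]
    have h5 : ∀ g : G, χ ((MulAut.conj x).toEquiv g) = χ g := fun g => hχ g x
    simp only [h4, h5, ite_mul, one_mul, zero_mul]
    rw [← Finset.sum_filter]
    exact Finset.sum_subtype _ (by simp) _
  unfold innerChar indTrivChar
  have h3 : ∑ g : G, (Nat.card H : ℂ)⁻¹ * (Nat.card {x : G // x⁻¹ * g * x ∈ H} : ℂ) *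
      (starRingEnd ℂ) (χ g) = (Nat.card H : ℂ)⁻¹ * ((Fintype.card G : ℂ) *
        ∑ h : H, (starRingEnd ℂ) (χ h)) := by
    simp only [h1]
    simp_rw [mul_assoc (Nat.card H : ℂ)⁻¹, ← Finset.mul_sum]
    congr 1
    simp only [Finset.sum_mul]
    rw [Finset.sum_comm]
    simp only [h2, Finset.sum_const, Finset.card_univ, nsmul_eq_mul]
  rw [h3]
  have hG : (Fintype.card G : ℂ) ≠ 0 := Nat.cast_ne_zero.2 Fintype.card_ne_zero
  rw [map_mul, map_sum, map_inv₀, Complex.conj_natCast]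
  field_simp

/-- The Specht module `SP_λ` occurs with multiplicity one in the representation of `S_n`
induced from the identity representation of the Young subgroup `H(λ)`. -/
theorem mult_specht_in_ind_eq_one (n : ℕ) (lam : YoungDiagram) (hlam : lam.card = n) :
    innerChar (indTrivChar (youngH n lam)) (spechtChar n lam) = 1 := by
  haveI : FiniteDimensional ℂ (spechtModule n lam) :=
    FiniteDimensional.span_of_finite ℂ (Set.finite_range _)
  haveI : Invertible (Nat.card (youngH n lam) : ℂ) :=
    invertibleOfNonzero (Nat.cast_ne_zero.2 Nat.card_pos.ne')
  rw [frob (youngH n lam) (spechtChar n lam)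
    (fun g h => Representation.char_conj (spechtRep n lam) g h)]
  have h := Representation.card_inv_mul_sum_char_eq_finrank
    ((spechtRep n lam).comp (youngH n lam).subtype)
  rw [finrank_inv n lam hlam] at h
  have h' : (Nat.card (youngH n lam) : ℂ)⁻¹ * ∑ g : youngH n lam, spechtChar n lam g =
      ((1 : ℕ) : ℂ) := h
  rw [h']
  simp

end
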